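/- arXiv:2001.08825 — 2 statements merged into one kernel-verified Lean document; each statement's English description precedes it below -/
import Mathlib

section
/- Let α ∈ (0,2), n ∈ ℕ (n ≥ 0), and x ∈ ℝ. Define CC_{2n}(x) = Re μ_n(x) (the cosine-like Christov function). Then y ↦ (CC_{2n}'(x−y) − CC_{2n}'(x+y))·y^(−α) is absolutely integrable on (0,∞), and (c_α/α)·∫₀^∞ (CC_{2n}'(x−y) − CC_{2n}'(x+y))·y^(−α) dy = (Γ(1+α)/(1+x²)^((n+1+α)/2))·sin((n+1+α)·arccot(x) − πα/2)·∑_{l≥0, 2l≤n} (−1)^l·C(n,2l)·x^(n−2l)·H_α(2l) − (Γ(1+α)/(1+x²)^((n+1+α)/2))·cos((n+1+α)·arccot(x) − πα/2)·∑_{l≥0, 2l+1≤n} (−1)^l·C(n,2l+1)·x^(n−1−2l)·H_α(2l+1). -/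
open MeasureTheory Finset

/-- The constant `c_α = α·2^(α−1)·Γ(1/2+α/2)/(√π·Γ(1−α/2))`. -/
noncomputable def cFrac (α : ℝ) : ℝ :=
  α * 2 ^ (α - 1) * Real.Gamma (1 / 2 + α / 2) / (Real.sqrt Real.pi * Real.Gamma (1 - α / 2))

/-- The complex Higgins function `λ_n(x) = ((ix−1)/(ix+1))^n`. -/
noncomputable def higgins (n : ℤ) (x : ℝ) : ℂ :=
  ((Complex.I * (x : ℂ) - 1) / (Complex.I * (x : ℂ) + 1)) ^ n

/-- The derivative `λ_n'`. -/
noncomputable def higgins' (n : ℤ) (x : ℝ) : ℂ := deriv (higgins n) x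

/-- The complex Christov function `μ_n(x) = (ix−1)^n/(ix+1)^(n+1)`. -/
noncomputable def christov (n : ℤ) (x : ℝ) : ℂ :=
  (Complex.I * (x : ℂ) - 1) ^ n / (Complex.I * (x : ℂ) + 1) ^ (n + 1)

/-- The derivative `μ_n'`. -/
noncomputable def christov' (n : ℤ) (x : ℝ) : ℂ := deriv (christov n) x

/-- Generalized binomial coefficient `C(z,k) = z(z−1)⋯(z−k+1)/k!` over `ℂ`. -/
noncomputable def gbinom (z : ℂ) (k : ℕ) : ℂ :=
  (∏ i ∈ Finset.range k, (z - (i : ℂ))) / (k.factorial : ℂ)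

/-- Generalized binomial coefficient `C(z,k) = z(z−1)⋯(z−k+1)/k!` over `ℝ`. -/
noncomputable def gbinomR (z : ℝ) (k : ℕ) : ℝ :=
  (∏ i ∈ Finset.range k, (z - (i : ℝ))) / (k.factorial : ℝ)

/-- Rising factorial (Pochhammer symbol) `(z)_k = z(z+1)⋯(z+k−1)` over `ℂ`. -/
noncomputable def poch (z : ℂ) (k : ℕ) : ℂ := ∏ i ∈ Finset.range k, (z + (i : ℂ))

/-- `G_α(l) = (1/(l+1))·∑_{k=0}^{l} C(l+1,k+1)·C(−1−α,k)·2^k = ₂F₁(−l, 1+α; 2; 2)`, over `ℂ`. -/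
noncomputable def Gc (α : ℝ) (l : ℕ) : ℂ :=
  (1 / ((l : ℂ) + 1)) * ∑ k ∈ Finset.range (l + 1),
    gbinom ((l : ℂ) + 1) (k + 1) * gbinom (-1 - (α : ℂ)) k * 2 ^ k

/-- `G_α(l) = (1/(l+1))·∑_{k=0}^{l} C(l+1,k+1)·C(−1−α,k)·2^k = ₂F₁(−l, 1+α; 2; 2)`, over `ℝ`. -/
noncomputable def GR (α : ℝ) (l : ℕ) : ℝ :=
  (1 / ((l : ℝ) + 1)) * ∑ k ∈ Finset.range (l + 1),
    gbinomR ((l : ℝ) + 1) (k + 1) * gbinomR (-1 - α) k * 2 ^ k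

/-- `H_α(l) = ∑_{k=0}^{l} C(l,k)·C(−1−α,k)·2^k = ₂F₁(−l, 1+α; 1; 2)`, over `ℂ`. -/
noncomputable def Hc (α : ℝ) (l : ℕ) : ℂ :=
  ∑ k ∈ Finset.range (l + 1), gbinom (l : ℂ) k * gbinom (-1 - (α : ℂ)) k * 2 ^ k

/-- `H_α(l) = ∑_{k=0}^{l} C(l,k)·C(−1−α,k)·2^k = ₂F₁(−l, 1+α; 1; 2)`, over `ℝ`. -/
noncomputable def HR (α : ℝ) (l : ℕ) : ℝ :=
  ∑ k ∈ Finset.range (l + 1), gbinomR (l : ℝ) k * gbinomR (-1 - α) k * 2 ^ k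

/-- `arccot(x) = π/2 − arctan(x) ∈ (0,π)`. -/
noncomputable def arccot (x : ℝ) : ℝ := Real.pi / 2 - Real.arctan x

/-- The cosine-like Christov function `CC_{2n}(x) = Re μ_n(x)`. -/
noncomputable def CC (n : ℕ) (x : ℝ) : ℝ := (christov (n : ℤ) x).re

/-- The derivative `CC_{2n}'`. -/
noncomputable def CC' (n : ℕ) (x : ℝ) : ℝ := deriv (CC n) x


lemma aux_split (G : ℝ → ℂ) (α A : ℝ) (hα2 : α < 2) (hG : ContinuousOn G (Set.Ioi 0))
    (h1 : ∀ y > 0, ‖G y‖ ≤ A * y ^ (1 - α)) (h2 : IntegrableOn G (Set.Ioi 1)) :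
    IntegrableOn G (Set.Ioi 0) := by
  rw [← Set.Ioc_union_Ioi_eq_Ioi (zero_le_one' ℝ)]
  refine IntegrableOn.union ?_ h2
  have hi : IntegrableOn (fun y : ℝ => A * y ^ (1 - α)) (Set.Ioc 0 1) := by
    have := (intervalIntegral.intervalIntegrable_rpow' (a := 0) (b := 1) (r := 1 - α) (by linarith))
    rw [intervalIntegrable_iff_integrableOn_Ioc_of_le zero_le_one] at this
    exact this.const_mul A
  refine Integrable.mono' hi ?_ ?_
  · exact (hG.mono Set.Ioc_subset_Ioi_self).aestronglyMeasurable measurableSet_Ioc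
  · refine (ae_restrict_iff' measurableSet_Ioc).2 (Filter.Eventually.of_forall fun y hy => ?_)
    exact h1 y hy.1

lemma cont_rpow_cast (p : ℝ) : ContinuousOn (fun y : ℝ => ((y ^ p : ℝ) : ℂ)) (Set.Ioi 0) := by
  refine Complex.continuous_ofReal.comp_continuousOn ?_
  exact ContinuousOn.rpow_const continuousOn_id (fun y hy => Or.inl (ne_of_gt hy))

lemma H0 (F : ℝ → ℂ) (hF : Continuous F) (A B α : ℝ) (hα : 0 < α) (hα2 : α < 2)
    (h1 : ∀ y > 0, ‖F y‖ ≤ A * y ^ 2) (h2 : ∀ y > 0, ‖F y‖ ≤ B) :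
    IntegrableOn (fun y : ℝ => ((y ^ (-1 - α) : ℝ) : ℂ) * F y) (Set.Ioi 0) := by
  refine aux_split _ α A hα2 ((cont_rpow_cast _).mul hF.continuousOn) ?_ ?_
  · intro y hy
    rw [norm_mul, Complex.norm_real, Real.norm_of_nonneg (by positivity)]
    calc y ^ (-1 - α) * ‖F y‖ ≤ y ^ (-1 - α) * (A * y ^ 2) := by
          gcongr; exact h1 y hy
      _ = A * (y ^ (-1 - α) * y ^ (2 : ℝ)) := by rw [Real.rpow_two]; ring
      _ = A * y ^ (1 - α) := by rw [← Real.rpow_add hy]; ring_nf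
  · have hi : IntegrableOn (fun y : ℝ => B * y ^ (-1 - α)) (Set.Ioi 1) :=
      (integrableOn_Ioi_rpow_of_lt (by linarith) zero_lt_one).const_mul B
    refine Integrable.mono' hi ?_ ?_
    · exact (((cont_rpow_cast _).mul hF.continuousOn).mono
        (Set.Ioi_subset_Ioi zero_le_one)).aestronglyMeasurable measurableSet_Ioi
    · refine (ae_restrict_iff' measurableSet_Ioi).2 (Filter.Eventually.of_forall fun y hy => ?_)
      have hy0 : 0 < y := lt_trans one_pos hy
      rw [norm_mul, Complex.norm_real, Real.norm_of_nonneg (by positivity), mul_comm]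
      gcongr; exact h2 y hy0

lemma H1 (f : ℝ → ℂ) (hf : Continuous f) (A α : ℝ) (hα : 0 < α) (hα2 : α < 2)
    (h1 : ∀ y > 0, ‖f y‖ ≤ A * y) (h2 : IntegrableOn f (Set.Ioi 0)) :
    IntegrableOn (fun y : ℝ => ((y ^ (-α) : ℝ) : ℂ) * f y) (Set.Ioi 0) := by
  refine aux_split _ α A hα2 ((cont_rpow_cast _).mul hf.continuousOn) ?_ ?_
  · intro y hy
    rw [norm_mul, Complex.norm_real, Real.norm_of_nonneg (by positivity)]
    calc y ^ (-α) * ‖f y‖ ≤ y ^ (-α) * (A * y) := by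
          gcongr; exact h1 y hy
      _ = A * (y ^ (-α) * y ^ (1 : ℝ)) := by rw [Real.rpow_one]; ring
      _ = A * y ^ (1 - α) := by rw [← Real.rpow_add hy]; ring_nf
  · refine Integrable.mono (h2.mono_set (Set.Ioi_subset_Ioi zero_le_one)) ?_ ?_
    · exact (((cont_rpow_cast _).mul hf.continuousOn).mono
        (Set.Ioi_subset_Ioi zero_le_one)).aestronglyMeasurable measurableSet_Ioi
    · refine (ae_restrict_iff' measurableSet_Ioi).2 (Filter.Eventually.of_forall fun y hy => ?_)
      have hy0 : 0 < y := lt_trans one_pos hy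
      rw [norm_mul, Complex.norm_real, Real.norm_of_nonneg (by positivity)]
      have : y ^ (-α) ≤ 1 := Real.rpow_le_one_of_one_le_of_nonpos (le_of_lt hy) (by linarith)
      nlinarith [norm_nonneg (f y)]

lemma mvt_sq (F f : ℝ → ℂ) (A : ℝ) (hA : 0 ≤ A) (hd : ∀ y, HasDerivAt F (f y) y) (h0 : F 0 = 0)
    (h00 : f 0 = 0) (h1 : ∀ y > 0, ‖f y‖ ≤ A * y) : ∀ y > 0, ‖F y‖ ≤ A * y ^ 2 := by
  intro y hy
  have := Convex.norm_image_sub_le_of_norm_hasDerivWithin_le (f := F) (f' := f) (s := Set.Icc 0 y)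
    (x := 0) (y := y) (C := A * y) (fun x _ => (hd x).hasDerivWithinAt)
    (fun x hx => ?_) (convex_Icc 0 y) ⟨le_rfl, hy.le⟩ ⟨hy.le, le_rfl⟩
  · rw [h0, sub_zero, sub_zero, Real.norm_of_nonneg hy.le] at this
    linarith
  · rcases hx.1.eq_or_lt with h | h
    · rw [← h, h00, norm_zero]; positivity
    · exact (h1 x h).trans (by gcongr; exact hx.2)

lemma IBP (F f : ℝ → ℂ) (A B α : ℝ) (hA : 0 ≤ A) (hα : 0 < α) (hα2 : α < 2)
    (hd : ∀ y, HasDerivAt F (f y) y)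
    (hf : Continuous f) (h0 : F 0 = 0) (h00 : f 0 = 0)
    (h1 : ∀ y > 0, ‖f y‖ ≤ A * y) (h2 : ∀ y > 0, ‖F y‖ ≤ B)
    (hi : IntegrableOn f (Set.Ioi 0)) :
    ∫ y in Set.Ioi (0 : ℝ), ((y ^ (-α) : ℝ) : ℂ) * f y =
      α * ∫ y in Set.Ioi (0 : ℝ), ((y ^ (-1 - α) : ℝ) : ℂ) * F y := by
  have hF : Continuous F := continuous_iff_continuousAt.2 fun y => (hd y).continuousAt
  have hF2 := mvt_sq F f A hA hd h0 h00 h1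
  have i0 := H0 F hF A B α hα hα2 hF2 h2
  have i1 := H1 f hf A α hα hα2 h1 hi
  have hv : ∀ y ∈ Set.Ioi (0 : ℝ), HasDerivAt (fun y : ℝ => ((y ^ (-α) : ℝ) : ℂ))
      (((-α * y ^ (-α - 1) : ℝ) : ℂ)) y := fun y hy =>
    (Real.hasDerivAt_rpow_const (Or.inl (ne_of_gt hy))).ofReal_comp
  have e : ∀ y : ℝ, F y * ((-α * y ^ (-α - 1) : ℝ) : ℂ) =
      (-α : ℂ) * (((y ^ (-1 - α) : ℝ) : ℂ) * F y) := by
    intro y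
    rw [show -1 - α = -α - 1 by ring]; push_cast; ring
  have lim0 : Filter.Tendsto (F * fun y : ℝ => ((y ^ (-α) : ℝ) : ℂ)) (nhdsWithin 0 (Set.Ioi 0))
      (nhds 0) := by
    have : Filter.Tendsto (fun y : ℝ => A * y ^ (2 - α)) (nhdsWithin 0 (Set.Ioi 0)) (nhds 0) := by
      have h := (Real.continuousAt_rpow_const 0 (2 - α) (Or.inr (by linarith))).tendsto
      rw [Real.zero_rpow (by linarith)] at h
      simpa using (h.mono_left nhdsWithin_le_nhds).const_mul A
    refine squeeze_zero_norm' ?_ this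
    filter_upwards [self_mem_nhdsWithin] with y hy
    have hy : 0 < y := hy
    rw [Pi.mul_apply, norm_mul, Complex.norm_real, Real.norm_of_nonneg (by positivity)]
    calc ‖F y‖ * y ^ (-α) ≤ (A * y ^ 2) * y ^ (-α) := by gcongr; exact hF2 y hy
      _ = A * (y ^ (2 : ℝ) * y ^ (-α)) := by rw [Real.rpow_two]; ring
      _ = A * y ^ (2 - α) := by rw [← Real.rpow_add hy]; ring_nf
  have lim1 : Filter.Tendsto (F * fun y : ℝ => ((y ^ (-α) : ℝ) : ℂ)) Filter.atTop (nhds 0) := by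
    have : Filter.Tendsto (fun y : ℝ => B * y ^ (-α)) Filter.atTop (nhds 0) := by
      simpa using (tendsto_rpow_neg_atTop hα).const_mul B
    refine squeeze_zero_norm' ?_ this
    filter_upwards [Filter.eventually_gt_atTop 0] with y hy
    rw [Pi.mul_apply, norm_mul, Complex.norm_real, Real.norm_of_nonneg (by positivity)]
    gcongr; exact h2 y hy
  have key := integral_Ioi_mul_deriv_eq_deriv_mul (u := F) (u' := f)
    (v := fun y : ℝ => ((y ^ (-α) : ℝ) : ℂ)) (v' := fun y : ℝ => ((-α * y ^ (-α - 1) : ℝ) : ℂ))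
    (a := 0) (a' := 0) (b' := 0) (fun y _ => hd y) hv ?_ ?_ lim0 lim1
  · simp_rw [e, integral_const_mul] at key
    simp_rw [mul_comm _ (f _)]
    linear_combination key
  · have := i0.const_mul (-α : ℂ)
    refine this.congr ?_
    exact Filter.Eventually.of_forall fun y => (e y).symm
  · refine i1.congr ?_
    exact Filter.Eventually.of_forall fun y => mul_comm _ _

/-- The constant `∫ (1 - cos y) y^(-1-α)`. -/
noncomputable def Ccos (α : ℝ) : ℝ := ∫ y in Set.Ioi (0 : ℝ), y ^ (-1 - α) * (1 - Real.cos y)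

lemma int_cos (α : ℝ) (hα : 0 < α) (hα2 : α < 2) :
    IntegrableOn (fun y : ℝ => y ^ (-1 - α) * (1 - Real.cos y)) (Set.Ioi 0) := by
  have := H0 (fun y => ((1 - Real.cos y : ℝ) : ℂ)) (by fun_prop) (1/2) 2 α hα hα2 ?_ ?_
  · have := this.re
    refine this.congr (Filter.Eventually.of_forall fun y => ?_)
    simp only [← Complex.ofReal_mul]
    exact Complex.ofReal_re _
  · intro y hy
    rw [Complex.norm_real, Real.norm_of_nonneg (by linarith [Real.cos_le_one y])]
    linarith [Real.one_sub_sq_div_two_le_cos (x := y)]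
  · intro y hy
    rw [Complex.norm_real, Real.norm_of_nonneg (by linarith [Real.cos_le_one y])]
    linarith [Real.neg_one_le_cos y]

lemma scale_eq (α t : ℝ) (ht : 0 < t) {y : ℝ} (hy : 0 < y) :
    y ^ (-1 - α) * (1 - Real.cos (t * y)) =
      t ^ (1 + α) * ((t * y) ^ (-1 - α) * (1 - Real.cos (t * y))) := by
  rw [Real.mul_rpow ht.le hy.le, ← mul_assoc, ← mul_assoc, ← Real.rpow_add ht]
  rw [show 1 + α + (-1 - α) = 0 by ring, Real.rpow_zero, one_mul]

lemma int_cos_scale (α t : ℝ) (hα : 0 < α) (hα2 : α < 2) (ht : 0 < t) :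
    IntegrableOn (fun y : ℝ => y ^ (-1 - α) * (1 - Real.cos (t * y))) (Set.Ioi 0) := by
  have := (integrableOn_Ioi_comp_mul_left_iff
    (fun y : ℝ => y ^ (-1 - α) * (1 - Real.cos y)) 0 ht).2 (by simpa using int_cos α hα hα2)
  refine IntegrableOn.congr_fun (this.const_mul (t ^ (1 + α))) ?_ measurableSet_Ioi
  intro y hy
  exact (scale_eq α t ht hy).symm

lemma integral_cos_scale (α t : ℝ) (ht : 0 < t) :
    ∫ y in Set.Ioi (0 : ℝ), y ^ (-1 - α) * (1 - Real.cos (t * y)) = t ^ α * Ccos α := by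
  have h := integral_comp_mul_left_Ioi (fun y : ℝ => y ^ (-1 - α) * (1 - Real.cos y)) 0 ht
  rw [setIntegral_congr_fun measurableSet_Ioi (fun y hy => scale_eq α t ht hy),
    integral_const_mul, h, mul_zero, smul_eq_mul, ← mul_assoc, Ccos]
  congr 1
  rw [add_comm, Real.rpow_add ht, Real.rpow_one]
  field_simp

lemma fub (g : ℝ → ℂ) (hg : ContinuousOn g (Set.Ioi 0)) (α : ℝ) (hα : 0 < α) (hα2 : α < 2)
    (hi : IntegrableOn (fun t : ℝ => ((t ^ α : ℝ) : ℂ) * g t) (Set.Ioi 0)) :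
    ∫ y in Set.Ioi (0 : ℝ), ((y ^ (-1 - α) : ℝ) : ℂ) *
        ∫ t in Set.Ioi (0 : ℝ), ((1 - Real.cos (t * y) : ℝ) : ℂ) * g t =
      Ccos α * ∫ t in Set.Ioi (0 : ℝ), ((t ^ α : ℝ) : ℂ) * g t := by
  set K : ℝ → ℝ → ℂ := fun t y => ((y ^ (-1 - α) * (1 - Real.cos (t * y)) : ℝ) : ℂ) * g t with hK
  have hnn : ∀ t y : ℝ, 0 < y → 0 ≤ y ^ (-1 - α) * (1 - Real.cos (t * y)) := fun t y hy =>
    mul_nonneg (by positivity) (by linarith [Real.cos_le_one (t * y)])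
  have hKint : Integrable (Function.uncurry K)
      ((volume.restrict (Set.Ioi 0)).prod (volume.restrict (Set.Ioi 0))) := by
    have hm : AEStronglyMeasurable (Function.uncurry K)
      ((volume.restrict (Set.Ioi 0)).prod (volume.restrict (Set.Ioi 0))) := by
      rw [Measure.prod_restrict]
      refine ContinuousOn.aestronglyMeasurable ?_ (measurableSet_Ioi.prod measurableSet_Ioi)
      refine ContinuousOn.mul ?_ (hg.comp continuousOn_fst fun z hz => hz.1)
      refine Complex.continuous_ofReal.comp_continuousOn ?_
      refine ContinuousOn.mul ?_ (by fun_prop)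
      exact ContinuousOn.rpow_const continuousOn_snd (fun y hy => Or.inl (ne_of_gt hy.2))
    rw [integrable_prod_iff hm]
    constructor
    · refine (ae_restrict_iff' measurableSet_Ioi).2 (Filter.Eventually.of_forall fun t ht => ?_)
      have h := (int_cos_scale α t hα hα2 ht).ofReal (𝕜 := ℂ)
      exact h.mul_const (g t)
    · refine IntegrableOn.congr_fun (hi.norm.const_mul (Ccos α)) ?_ measurableSet_Ioi
      intro t ht
      have ht : 0 < t := ht
      simp only [Function.uncurry_apply_pair, hK]
      rw [setIntegral_congr_fun (g := fun y => (y ^ (-1 - α) * (1 - Real.cos (t * y))) * ‖g t‖)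
        measurableSet_Ioi, integral_mul_const, integral_cos_scale α t ht, norm_mul,
        Complex.norm_real, Real.norm_of_nonneg (by positivity)]
      · ring
      · intro y hy
        dsimp only
        rw [norm_mul, Complex.norm_real, Real.norm_of_nonneg (hnn t y hy)]
  have := integral_integral_swap hKint
  rw [← integral_const_mul]
  convert this.symm using 1
  · refine setIntegral_congr_fun measurableSet_Ioi fun y hy => ?_
    simp only [hK]
    rw [← integral_const_mul]
    congr 1; ext t; push_cast; ring
  · refine setIntegral_congr_fun measurableSet_Ioi fun t ht => ?_
    simp only [hK]
    rw [integral_mul_const, integral_complex_ofReal, integral_cos_scale α t ht]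
    push_cast; ring

lemma gauss_real (y : ℝ) : ∫ t : ℝ, Real.cos (t * y) * Real.exp (-t ^ 2) =
    √Real.pi * Real.exp (-y ^ 2 / 4) := by
  have h := fourierIntegral_gaussian (b := 1) (by simp) (y : ℂ)
  have hi : Integrable (fun x : ℝ => Complex.exp (Complex.I * y * x) * Complex.exp (-1 * (x : ℂ) ^ 2)) := by
    have := GaussianFourier.integrable_cexp_neg_mul_sq_add_real_mul_I (b := 1) (by simp) 0
    have h2 := integrable_cexp_quadratic (b := 1) (by simp) (Complex.I * y) 0
    refine h2.congr (Filter.Eventually.of_forall fun x => ?_)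
    simp only [← Complex.exp_add]
    congr 1; ring
  have h3 := congrArg Complex.re h
  rw [← RCLike.re_eq_complex_re, ← integral_re hi] at h3
  have e1 : ∀ x : ℝ, RCLike.re (Complex.exp (Complex.I * y * x) * Complex.exp (-1 * (x : ℂ) ^ 2)) =
      Real.cos (x * y) * Real.exp (-x ^ 2) := by
    intro x
    rw [show Complex.I * y * x = ((x * y : ℝ) : ℂ) * Complex.I by push_cast; ring,
      show (-1 * (x : ℂ) ^ 2) = ((-x ^ 2 : ℝ) : ℂ) by push_cast; ring, ← Complex.ofReal_exp]
    change (Complex.exp _ * _).re = _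
    rw [Complex.re_mul_ofReal, Complex.exp_ofReal_mul_I_re]
  simp_rw [e1] at h3
  rw [h3, RCLike.re_eq_complex_re, div_one, show (1 / 2 : ℂ) = ((1 / 2 : ℝ) : ℂ) by push_cast; rfl,
    ← Complex.ofReal_cpow Real.pi_pos.le, ← Real.sqrt_eq_rpow,
    show (-(y : ℂ) ^ 2 / (4 * 1)) = ((-y ^ 2 / 4 : ℝ) : ℂ) by push_cast; ring, ← Complex.ofReal_exp,
    ← Complex.ofReal_mul, Complex.ofReal_re]

lemma gauss_half (y : ℝ) : ∫ t in Set.Ioi (0 : ℝ), Real.cos (t * y) * Real.exp (-t ^ 2) =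
    √Real.pi / 2 * Real.exp (-y ^ 2 / 4) := by
  have h := integral_comp_abs (f := fun t : ℝ => Real.cos (t * y) * Real.exp (-t ^ 2))
  have e : ∀ t : ℝ, Real.cos (|t| * y) * Real.exp (-|t| ^ 2) = Real.cos (t * y) * Real.exp (-t ^ 2) := by
    intro t
    rcases abs_cases t with ⟨h, _⟩ | ⟨h, _⟩
    · rw [h]
    · rw [h, neg_mul, Real.cos_neg, neg_sq]
  simp_rw [e, gauss_real] at h
  linarith

lemma gauss_int : IntegrableOn (fun t : ℝ => Real.exp (-t ^ 2)) (Set.Ioi 0) := by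
  have := (integrable_exp_neg_mul_sq (b := 1) one_pos).integrableOn (s := Set.Ioi 0)
  simpa using this

lemma gauss_cos (y : ℝ) : ∫ t in Set.Ioi (0 : ℝ), (1 - Real.cos (t * y)) * Real.exp (-t ^ 2) =
    √Real.pi / 2 * (1 - Real.exp (-y ^ 2 / 4)) := by
  have h1 := gauss_half y
  have h0 := gauss_half 0
  simp only [mul_zero, Real.cos_zero, one_mul] at h0
  have i1 : IntegrableOn (fun t : ℝ => Real.cos (t * y) * Real.exp (-t ^ 2)) (Set.Ioi 0) := by
    refine Integrable.mono gauss_int (by fun_prop) (Filter.Eventually.of_forall fun t => ?_)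
    rw [norm_mul]
    have := Real.abs_cos_le_one (t * y)
    rw [← Real.norm_eq_abs] at this
    nlinarith [norm_nonneg (Real.exp (-t ^ 2))]
  simp_rw [sub_mul, one_mul]
  rw [integral_sub gauss_int i1, h0, h1]
  norm_num
  ring

lemma Ccos_eq (α : ℝ) (hα : 0 < α) (hα2 : α < 2) :
    Ccos α * Real.Gamma (1 / 2 + α / 2) * α = √Real.pi * 2 ^ (-α) * Real.Gamma (1 - α / 2) := by
  have hg : ∫ t in Set.Ioi (0 : ℝ), t ^ α * Real.exp (-t ^ 2) =
      1 / 2 * Real.Gamma (1 / 2 + α / 2) := by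
    have := integral_rpow_mul_exp_neg_mul_rpow (p := 2) (q := α) (b := 1) two_pos (by linarith) one_pos
    simp only [Real.rpow_two, neg_mul, one_mul, Real.one_rpow] at this
    rw [this]; congr 2; ring
  have hgi : IntegrableOn (fun t : ℝ => t ^ α * Real.exp (-t ^ 2)) (Set.Ioi 0) := by
    simpa using integrableOn_rpow_mul_exp_neg_mul_sq (b := 1) one_pos (s := α) (by linarith)
  have hg2 : ∫ y in Set.Ioi (0 : ℝ), y ^ (-α) * (y / 2 * Real.exp (-y ^ 2 / 4)) =
      2 ^ (-α) * Real.Gamma (1 - α / 2) := by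
    have := integral_rpow_mul_exp_neg_mul_rpow (p := 2) (q := 1 - α) (b := 1 / 4) two_pos
      (by linarith) (by norm_num)
    rw [setIntegral_congr_fun (g := fun y => 1 / 2 * (y ^ (1 - α) * Real.exp (-(1 / 4) * y ^ (2 : ℝ))))
      measurableSet_Ioi, integral_const_mul, this]
    · rw [show -(1 - α + 1) / 2 = (α - 2) / 2 by ring, show (1 / 4 : ℝ) = 2 ^ (-2 : ℝ) by
        rw [Real.rpow_neg (by norm_num), Real.rpow_two]; norm_num, ← Real.rpow_mul (by norm_num),
        show -2 * ((α - 2) / 2) = 2 + -α by ring, Real.rpow_add (by norm_num), Real.rpow_two,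
        show (1 - α + 1) / 2 = 1 - α / 2 by ring]
      ring
    · intro y hy
      have hy : 0 < y := hy
      dsimp only
      rw [show 1 - α = -α + 1 by ring, Real.rpow_add hy, Real.rpow_one, Real.rpow_two]
      ring_nf
  have F := fub (fun t => ((Real.exp (-t ^ 2) : ℝ) : ℂ)) (by fun_prop) α hα hα2 (by
    have := hgi.ofReal (𝕜 := ℂ)
    refine this.congr (Filter.Eventually.of_forall fun t => ?_)
    simp)
  have I := IBP (fun y : ℝ => ((1 - Real.exp (-y ^ 2 / 4) : ℝ) : ℂ))
    (fun y : ℝ => ((y / 2 * Real.exp (-y ^ 2 / 4) : ℝ) : ℂ)) (1 / 2) 1 α (by norm_num) hα hα2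
    ?_ (by fun_prop) (by simp) (by simp) ?_ ?_ ?_
  · simp only [← Complex.ofReal_mul, integral_complex_ofReal] at F I
    rw [hg2] at I
    replace F := Complex.ofReal_inj.1 F
    replace I := Complex.ofReal_inj.1 I
    simp_rw [gauss_cos] at F
    rw [hg] at F
    have e : ∀ y : ℝ, y ^ (-1 - α) * (√Real.pi / 2 * (1 - Real.exp (-y ^ 2 / 4))) =
      √Real.pi / 2 * (y ^ (-1 - α) * (1 - Real.exp (-y ^ 2 / 4))) := fun y => by ring
    simp_rw [e, integral_const_mul] at F
    linear_combination (-2 * α) * F - √Real.pi * I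
  · intro y
    refine HasDerivAt.ofReal_comp (f := fun y : ℝ => 1 - Real.exp (-y ^ 2 / 4)) ?_
    have : HasDerivAt (fun y : ℝ => -y ^ 2 / 4) (-(2 * y) / 4) y := by
      simpa using ((hasDerivAt_pow 2 y).neg).div_const 4
    refine (this.exp.const_sub 1).congr_deriv ?_
    ring
  · intro y hy
    rw [Complex.norm_real, Real.norm_of_nonneg (by positivity)]
    have : Real.exp (-y ^ 2 / 4) ≤ 1 := Real.exp_le_one_iff.2 (by nlinarith)
    nlinarith
  · intro y hy
    have : Real.exp (-y ^ 2 / 4) ≤ 1 := Real.exp_le_one_iff.2 (by nlinarith)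
    rw [Complex.norm_real, Real.norm_of_nonneg (by linarith)]
    linarith [Real.exp_pos (-y ^ 2 / 4)]
  · have := (integrableOn_rpow_mul_exp_neg_mul_sq (b := 1 / 4) (by norm_num) (s := 1) (by norm_num))
    have := (this.const_mul (1 / 2)).ofReal (𝕜 := ℂ)
    refine this.congr (Filter.Eventually.of_forall fun t => ?_)
    have e : 1 / 2 * (t ^ (1 : ℝ) * Real.exp (-(1 / 4) * t ^ 2)) =
        t / 2 * Real.exp (-t ^ 2 / 4) := by
      rw [show -(1 / 4) * t ^ 2 = -t ^ 2 / 4 by ring, Real.rpow_one]; ring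
    exact congrArg (fun r : ℝ => (r : ℂ)) e

/-- Laplace type integral. -/
noncomputable def Jf (s x : ℝ) : ℂ :=
  ∫ t in Set.Ioi (0 : ℝ), ((t ^ (s - 1) : ℝ) : ℂ) * Complex.exp (-(1 + Complex.I * x) * t)

lemma norm_cexp_r (x t : ℝ) : ‖Complex.exp (-(1 + Complex.I * x) * t)‖ = Real.exp (-t) := by
  rw [Complex.norm_exp]; congr 1; simp

lemma gamma_int (s : ℝ) (hs : 0 < s) :
    IntegrableOn (fun t : ℝ => t ^ (s - 1) * Real.exp (-t)) (Set.Ioi 0) := by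
  simpa only [mul_comm] using Real.GammaIntegral_convergent hs

lemma J_int (s x : ℝ) (hs : 0 < s) : IntegrableOn
    (fun t : ℝ => ((t ^ (s - 1) : ℝ) : ℂ) * Complex.exp (-(1 + Complex.I * x) * t)) (Set.Ioi 0) := by
  refine Integrable.mono' (gamma_int s hs) ?_ ?_
  · exact ((cont_rpow_cast _).mul (by fun_prop)).aestronglyMeasurable measurableSet_Ioi
  · refine (ae_restrict_iff' measurableSet_Ioi).2 (Filter.Eventually.of_forall fun t ht => ?_)
    have ht : 0 < t := ht
    rw [norm_mul, norm_cexp_r, Complex.norm_real, Real.norm_of_nonneg (by positivity)]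

lemma J_deriv (s x : ℝ) (hs : 0 < s) : HasDerivAt (Jf s) (-Complex.I * Jf (s + 1) x) x := by
  have h := hasDerivAt_integral_of_dominated_loc_of_deriv_le
    (F := fun (x : ℝ) (t : ℝ) => ((t ^ (s - 1) : ℝ) : ℂ) * Complex.exp (-(1 + Complex.I * x) * t))
    (F' := fun (x : ℝ) (t : ℝ) => -Complex.I *
      (((t ^ (s + 1 - 1) : ℝ) : ℂ) * Complex.exp (-(1 + Complex.I * x) * t)))
    (μ := volume.restrict (Set.Ioi 0)) (s := Set.univ) (x₀ := x)
    (bound := fun t : ℝ => t ^ (s + 1 - 1) * Real.exp (-t))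
    Filter.univ_mem ?_ (J_int s x hs) ?_ ?_ (gamma_int _ (by linarith)) ?_
  · have h2 := h.2
    rw [integral_const_mul] at h2
    exact h2
  · exact Filter.Eventually.of_forall fun x => (J_int s x hs).aestronglyMeasurable
  · exact ((J_int (s + 1) x (by linarith)).const_mul _).aestronglyMeasurable
  · refine (ae_restrict_iff' measurableSet_Ioi).2 (Filter.Eventually.of_forall fun t ht x _ => ?_)
    have ht : 0 < t := ht
    rw [norm_mul, norm_neg, Complex.norm_I, one_mul, norm_mul, norm_cexp_r, Complex.norm_real,
      Real.norm_of_nonneg (by positivity)]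
  · refine (ae_restrict_iff' measurableSet_Ioi).2 (Filter.Eventually.of_forall fun t ht x _ => ?_)
    have ht : 0 < t := ht
    have h1 : HasDerivAt (fun x : ℝ => -(1 + Complex.I * (x : ℂ)) * (t : ℂ)) (-Complex.I * t) x := by
      have h0 : HasDerivAt (fun x : ℝ => (x : ℂ)) 1 x := Complex.ofRealCLM.hasDerivAt
      simpa using (((h0.const_mul Complex.I).const_add 1).neg).mul_const (t : ℂ)
    have := h1.cexp.const_mul ((t ^ (s - 1) : ℝ) : ℂ)
    refine this.congr_deriv ?_
    rw [show s + 1 - 1 = s - 1 + 1 by ring, Real.rpow_add ht, Real.rpow_one]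
    push_cast; ring

lemma J_rec (s x : ℝ) (hs : 0 < s) : (1 + Complex.I * x) * Jf (s + 1) x = s * Jf s x := by
  have i1 := J_int s x hs
  have i2 := J_int (s + 1) x (by linarith)
  have hv : ∀ t : ℝ, HasDerivAt (fun t : ℝ => Complex.exp (-(1 + Complex.I * x) * t))
      (-(1 + Complex.I * x) * Complex.exp (-(1 + Complex.I * x) * t)) t := by
    intro t
    have h0 : HasDerivAt (fun x : ℝ => (x : ℂ)) 1 t := Complex.ofRealCLM.hasDerivAt
    have := (h0.const_mul (-(1 + Complex.I * x))).cexp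
    convert this using 1; ring
  have e : ∀ t : ℝ, ((t ^ s : ℝ) : ℂ) * (-(1 + Complex.I * x) * Complex.exp (-(1 + Complex.I * x) * t))
      = -(1 + Complex.I * x) * (((t ^ (s + 1 - 1) : ℝ) : ℂ) * Complex.exp (-(1 + Complex.I * x) * t)) := by
    intro t; rw [add_sub_cancel_right]; ring
  have e2 : ∀ t : ℝ, ((s * t ^ (s - 1) : ℝ) : ℂ) * (Complex.exp (-(1 + Complex.I * x) * t))
      = s * (((t ^ (s - 1) : ℝ) : ℂ) * Complex.exp (-(1 + Complex.I * x) * t)) := by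
    intro t; push_cast; ring
  have nrm : ∀ t : ℝ, 0 < t → ‖((t ^ s : ℝ) : ℂ) * (Complex.exp (-(1 + Complex.I * x) * t))‖ =
      t ^ s * Real.exp (-1 * t) := by
    intro t ht
    rw [norm_mul, norm_cexp_r, Complex.norm_real, Real.norm_of_nonneg (by positivity), neg_one_mul]
  have key := integral_Ioi_mul_deriv_eq_deriv_mul (a := 0) (a' := 0) (b' := 0)
    (u := fun t : ℝ => ((t ^ s : ℝ) : ℂ)) (u' := fun t : ℝ => ((s * t ^ (s - 1) : ℝ) : ℂ))
    (v := fun t : ℝ => Complex.exp (-(1 + Complex.I * x) * t))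
    (fun t ht => (Real.hasDerivAt_rpow_const (Or.inl (ne_of_gt ht))).ofReal_comp)
    (fun t _ => hv t) ?_ ?_ ?_ ?_
  · simp_rw [e, e2, integral_const_mul] at key
    unfold Jf
    linear_combination -key
  · exact (i2.const_mul _).congr (Filter.Eventually.of_forall fun t => (e t).symm)
  · exact (i1.const_mul _).congr (Filter.Eventually.of_forall fun t => (e2 t).symm)
  · refine squeeze_zero_norm' (a := fun t : ℝ => t ^ s * Real.exp (-1 * t)) ?_ ?_
    · filter_upwards [self_mem_nhdsWithin] with t ht
      exact (nrm t ht).le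
    · have : ContinuousAt (fun t : ℝ => t ^ s * Real.exp (-1 * t)) 0 :=
        (Real.continuousAt_rpow_const 0 s (Or.inr hs.le)).mul (by fun_prop)
      have h := this.tendsto.mono_left (nhdsWithin_le_nhds (s := Set.Ioi 0))
      simpa [Real.zero_rpow hs.ne'] using h
  · refine squeeze_zero_norm' (a := fun t : ℝ => t ^ s * Real.exp (-1 * t)) ?_
      (tendsto_rpow_mul_exp_neg_mul_atTop_nhds_zero s 1 one_pos)
    filter_upwards [Filter.eventually_gt_atTop 0] with t ht
    exact (nrm t ht).le

lemma slit (x : ℝ) : 1 + Complex.I * (x : ℂ) ∈ Complex.slitPlane := by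
  left; simp

lemma w_ne (x : ℝ) : 1 + Complex.I * (x : ℂ) ≠ 0 := Complex.slitPlane_ne_zero (slit x)

lemma J_eq (s x : ℝ) (hs : 0 < s) :
    Jf s x = Real.Gamma s * (1 + Complex.I * x) ^ (-(s : ℂ)) := by
  have hd : ∀ x : ℝ, HasDerivAt (fun x : ℝ => Jf s x * (1 + Complex.I * (x : ℂ)) ^ (s : ℂ)) 0 x := by
    intro x
    have h0 : HasDerivAt (fun z : ℂ => 1 + Complex.I * z) Complex.I (x : ℂ) := by
      simpa using ((hasDerivAt_id (x : ℂ)).const_mul Complex.I).const_add 1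
    have h1 := (h0.cpow_const (c := (s : ℂ)) (slit x)).comp_ofReal
    have h2 := (J_deriv s x hs).mul h1
    refine h2.congr_deriv ?_
    have e : (1 + Complex.I * (x : ℂ)) ^ (s : ℂ) =
        (1 + Complex.I * (x : ℂ)) ^ ((s : ℂ) - 1) * (1 + Complex.I * (x : ℂ)) := by
      nth_rw 3 [← Complex.cpow_one (1 + Complex.I * (x : ℂ))]
      rw [← Complex.cpow_add _ _ (w_ne x)]; ring_nf
    rw [e]
    linear_combination (-Complex.I * (1 + Complex.I * (x : ℂ)) ^ ((s : ℂ) - 1)) * J_rec s x hs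
  have hc := is_const_of_deriv_eq_zero (fun x => (hd x).differentiableAt) (fun x => (hd x).deriv) x 0
  have h0 : Jf s 0 = Real.Gamma s := by
    rw [Real.Gamma_eq_integral hs, ← integral_complex_ofReal]
    unfold Jf
    congr 1; ext t; push_cast; simp [mul_comm]
  simp only [Complex.ofReal_zero, mul_zero, add_zero, Complex.one_cpow, mul_one, h0] at hc
  rw [← hc, mul_assoc, ← Complex.cpow_add _ _ (w_ne x)]
  simp

/-- The function `1/(1+is)`. -/
noncomputable def wf (s : ℝ) : ℂ := (1 + Complex.I * s)⁻¹

lemma wf_deriv (m : ℕ) (s : ℝ) :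
    HasDerivAt (fun s : ℝ => wf s ^ m) (-Complex.I * m * wf s ^ (m + 1)) s := by
  have h0 : HasDerivAt (fun x : ℝ => (x : ℂ)) 1 s := Complex.ofRealCLM.hasDerivAt
  have h1 : HasDerivAt (fun x : ℝ => 1 + Complex.I * (x : ℂ)) Complex.I s := by
    simpa using (h0.const_mul Complex.I).const_add 1
  have h2 : HasDerivAt wf (-Complex.I * wf s ^ 2) s := by
    refine (h1.inv (w_ne s)).congr_deriv ?_
    unfold wf; rw [inv_pow, div_eq_mul_inv]
  refine (h2.pow m).congr_deriv ?_
  rcases m with _ | m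
  · simp
  · simp only [Nat.add_sub_cancel]; push_cast; ring

lemma wf_cont : Continuous wf := by
  unfold wf
  exact Continuous.inv₀ (by fun_prop) w_ne

lemma wf_norm_sq (s : ℝ) : ‖wf s‖ ^ 2 = (1 + s ^ 2)⁻¹ := by
  unfold wf
  rw [norm_inv, inv_pow, ← Complex.normSq_eq_norm_sq, Complex.normSq_apply]
  simp; ring

lemma wf_norm_le (s : ℝ) : ‖wf s‖ ≤ 1 := by
  have h := wf_norm_sq s
  have : (1 + s ^ 2)⁻¹ ≤ 1 := inv_le_one_of_one_le₀ (by nlinarith)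
  nlinarith [norm_nonneg (wf s)]

lemma wf_pow_norm_le (s : ℝ) (m : ℕ) : ‖wf s ^ m‖ ≤ 1 := by
  rw [norm_pow]; exact pow_le_one₀ (norm_nonneg _) (wf_norm_le s)

lemma wf_pow_int (m : ℕ) : Integrable (fun s => wf s ^ (m + 2)) := by
  refine Integrable.mono' integrable_inv_one_add_sq (wf_cont.pow _).aestronglyMeasurable ?_
  refine Filter.Eventually.of_forall fun s => ?_
  rw [pow_add, norm_mul, norm_pow (wf s) 2, wf_norm_sq]
  have := wf_pow_norm_le s m
  have h2 : 0 ≤ (1 + s ^ 2)⁻¹ := by positivity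
  nlinarith

lemma wf_eq_J (m : ℕ) (hm : 0 < m) (s : ℝ) : (Real.Gamma m : ℂ) * wf s ^ m = Jf m s := by
  rw [J_eq m s (by exact_mod_cast hm), Complex.cpow_neg, Complex.ofReal_natCast,
    Complex.cpow_natCast, wf, inv_pow]

lemma wf_second (m : ℕ) (hm : 0 < m) (x y : ℝ) :
    (Real.Gamma m : ℂ) * (2 * wf x ^ m - wf (x - y) ^ m - wf (x + y) ^ m) =
      2 * ∫ t in Set.Ioi (0 : ℝ), ((1 - Real.cos (t * y) : ℝ) : ℂ) *
        (((t ^ ((m : ℝ) - 1) : ℝ) : ℂ) * Complex.exp (-(1 + Complex.I * x) * t)) := by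
  have hm' : (0 : ℝ) < m := by exact_mod_cast hm
  have i0 := J_int m x hm'
  have i1 := J_int m (x - y) hm'
  have i2 := J_int m (x + y) hm'
  have : (Real.Gamma m : ℂ) * (2 * wf x ^ m - wf (x - y) ^ m - wf (x + y) ^ m) =
      2 * Jf m x - Jf m (x - y) - Jf m (x + y) := by
    rw [← wf_eq_J m hm, ← wf_eq_J m hm, ← wf_eq_J m hm]; ring
  rw [this]
  unfold Jf
  rw [← integral_const_mul, ← integral_const_mul, ← integral_sub (i0.const_mul 2) i1,
    ← integral_sub (f := fun t : ℝ => 2 * (((t ^ ((m : ℝ) - 1) : ℝ) : ℂ) *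
      Complex.exp (-(1 + Complex.I * x) * t)) - ((t ^ ((m : ℝ) - 1) : ℝ) : ℂ) *
      Complex.exp (-(1 + Complex.I * ((x - y : ℝ) : ℂ)) * t)) ((i0.const_mul 2).sub i1) i2]
  congr 1; ext t
  have e1 : Complex.exp (-(1 + Complex.I * ((x - y : ℝ) : ℂ)) * t) =
      Complex.exp (-(1 + Complex.I * x) * t) * Complex.exp (((t * y : ℝ) : ℂ) * Complex.I) := by
    rw [← Complex.exp_add]; congr 1; push_cast; ring
  have e2 : Complex.exp (-(1 + Complex.I * ((x + y : ℝ) : ℂ)) * t) =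
      Complex.exp (-(1 + Complex.I * x) * t) * Complex.exp (-((t * y : ℝ) : ℂ) * Complex.I) := by
    rw [← Complex.exp_add]; congr 1; push_cast; ring
  have e3 : ((Real.cos (t * y) : ℝ) : ℂ) = (Complex.exp (((t * y : ℝ) : ℂ) * Complex.I) +
      Complex.exp (-((t * y : ℝ) : ℂ) * Complex.I)) / 2 := by
    rw [Complex.ofReal_cos, Complex.cos]
  rw [e1, e2, Complex.ofReal_sub, e3]
  push_cast; ring

lemma main_pow (α : ℝ) (hα : 0 < α) (hα2 : α < 2) (k : ℕ) (x : ℝ) :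
    IntegrableOn (fun y : ℝ => ((y ^ (-α) : ℝ) : ℂ) *
      (-Complex.I * ((k + 1 : ℕ) : ℂ) * (wf (x - y) ^ (k + 2) - wf (x + y) ^ (k + 2)))) (Set.Ioi 0) ∧
    (∫ y in Set.Ioi (0 : ℝ), ((y ^ (-α) : ℝ) : ℂ) *
      (-Complex.I * ((k + 1 : ℕ) : ℂ) * (wf (x - y) ^ (k + 2) - wf (x + y) ^ (k + 2)))) =
    (2 * α * Ccos α : ℝ) * (((Real.Gamma (k + 1 + α) / k.factorial : ℝ) : ℂ) *
      (1 + Complex.I * x) ^ (-((k + 1 + α : ℝ) : ℂ))) := by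
  set f : ℝ → ℂ := fun y => -Complex.I * ((k + 1 : ℕ) : ℂ) * (wf (x - y) ^ (k + 2) - wf (x + y) ^ (k + 2))
    with hf
  set F : ℝ → ℂ := fun y => 2 * wf x ^ (k + 1) - wf (x - y) ^ (k + 1) - wf (x + y) ^ (k + 1) with hF
  have hfc : Continuous f := by
    have := wf_cont
    fun_prop
  have hd : ∀ y, HasDerivAt F (f y) y := by
    intro y
    have h1 := (wf_deriv (k + 1) (x - y)).scomp y ((hasDerivAt_id y).const_sub x)
    have h2 := (wf_deriv (k + 1) (x + y)).scomp y ((hasDerivAt_id y).const_add x)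
    refine ((h1.const_sub (2 * wf x ^ (k + 1))).sub h2).congr_deriv ?_
    simp only [hf, neg_smul, one_smul]
    ring
  have hF0 : F 0 = 0 := by simp only [hF, sub_zero, add_zero]; ring
  have hf0 : f 0 = 0 := by simp only [hf, sub_zero, add_zero]; ring
  have hfb : ∀ y > 0, ‖f y‖ ≤ (2 * (k + 1) * (k + 2)) * y := by
    intro y hy
    have := Convex.norm_image_sub_le_of_norm_hasDerivWithin_le (f := fun s : ℝ => wf s ^ (k + 2))
      (f' := fun s => -Complex.I * ((k + 2 : ℕ) : ℂ) * wf s ^ (k + 2 + 1)) (s := Set.univ)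
      (x := x + y) (y := x - y) (C := k + 2) (fun s _ => (wf_deriv (k + 2) s).hasDerivWithinAt)
      (fun s _ => ?_) convex_univ trivial trivial
    · simp only [hf]
      rw [norm_mul, norm_mul, norm_neg, Complex.norm_I, Complex.norm_natCast, one_mul]
      rw [show x - y - (x + y) = -(2 * y) by ring, norm_neg, Real.norm_of_nonneg (by positivity)] at this
      push_cast
      calc ((k : ℝ) + 1) * _ ≤ ((k : ℝ) + 1) * ((k + 2) * (2 * y)) := by gcongr
        _ = _ := by ring
    · rw [norm_mul, norm_mul, norm_neg, Complex.norm_I, Complex.norm_natCast, one_mul]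
      have := wf_pow_norm_le s (k + 2 + 1)
      push_cast
      nlinarith [norm_nonneg (wf s ^ (k + 2 + 1))]
  have hFb : ∀ y > 0, ‖F y‖ ≤ 4 := by
    intro y _
    have h1 := wf_pow_norm_le x (k + 1)
    have h2 := wf_pow_norm_le (x - y) (k + 1)
    have h3 := wf_pow_norm_le (x + y) (k + 1)
    have h4 := norm_sub_le (2 * wf x ^ (k + 1) - wf (x - y) ^ (k + 1)) (wf (x + y) ^ (k + 1))
    have h5 := norm_sub_le (2 * wf x ^ (k + 1)) (wf (x - y) ^ (k + 1))
    have h6 : ‖2 * wf x ^ (k + 1)‖ = 2 * ‖wf x ^ (k + 1)‖ := by rw [norm_mul]; simp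
    simp only [hF]
    linarith
  have hfi : Integrable f := by
    have h := wf_pow_int k
    exact ((h.comp_sub_left x).sub (h.comp_add_left x)).const_mul _
  have hA : (0 : ℝ) ≤ 2 * (k + 1) * (k + 2) := by positivity
  refine ⟨H1 f hfc _ α hα hα2 hfb hfi.integrableOn, ?_⟩
  rw [IBP F f _ 4 α hA hα hα2 hd hfc hF0 hf0 hfb hFb hfi.integrableOn]
  have e0 : ∀ t : ℝ, 0 < t → ((t ^ α : ℝ) : ℂ) * (((t ^ (((k + 1 : ℕ) : ℝ) - 1) : ℝ) : ℂ) *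
      Complex.exp (-(1 + Complex.I * x) * t)) =
      ((t ^ ((k + 1 + α : ℝ) - 1) : ℝ) : ℂ) * Complex.exp (-(1 + Complex.I * x) * t) := by
    intro t ht
    rw [← mul_assoc, ← Complex.ofReal_mul, ← Real.rpow_add ht]
    rw [show α + (((k + 1 : ℕ) : ℝ) - 1) = k + 1 + α - 1 by push_cast; ring]
  have hpos : (0 : ℝ) < k + 1 + α := by positivity
  have fb := fub (fun t => ((t ^ (((k + 1 : ℕ) : ℝ) - 1) : ℝ) : ℂ) *
      Complex.exp (-(1 + Complex.I * x) * t)) ((cont_rpow_cast _).mul (by fun_prop)) α hα hα2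
      (IntegrableOn.congr_fun (J_int (k + 1 + α) x hpos) (fun t ht => (e0 t ht).symm) measurableSet_Ioi)
  rw [setIntegral_congr_fun measurableSet_Ioi (fun t ht => e0 t ht)] at fb
  change _ = _ * Jf (k + 1 + α) x at fb
  rw [J_eq _ _ hpos] at fb
  have hG : Real.Gamma ((k + 1 : ℕ) : ℝ) = k.factorial := by
    push_cast; exact Real.Gamma_nat_eq_factorial k
  have hk : (k.factorial : ℂ) ≠ 0 := by exact_mod_cast k.factorial_ne_zero
  have hFe : ∀ y : ℝ, ((y ^ (-1 - α) : ℝ) : ℂ) * F y = (2 / (k.factorial : ℂ)) *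
      (((y ^ (-1 - α) : ℝ) : ℂ) * ∫ t in Set.Ioi (0 : ℝ), ((1 - Real.cos (t * y) : ℝ) : ℂ) *
        (((t ^ (((k + 1 : ℕ) : ℝ) - 1) : ℝ) : ℂ) * Complex.exp (-(1 + Complex.I * x) * t))) := by
    intro y
    have := wf_second (k + 1) k.succ_pos x y
    rw [hG] at this
    simp only [hF]
    rw [Complex.ofReal_natCast] at this
    generalize (∫ t in Set.Ioi (0 : ℝ), ((1 - Real.cos (t * y) : ℝ) : ℂ) *
        (((t ^ (((k + 1 : ℕ) : ℝ) - 1) : ℝ) : ℂ) * Complex.exp (-(1 + Complex.I * x) * t))) = Q at this ⊢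
    field_simp
    linear_combination ((y ^ (-1 - α) : ℝ) : ℂ) * this
  simp_rw [hFe]
  rw [integral_const_mul, fb]
  push_cast
  field_simp

lemma const_eq (α : ℝ) (hα : 0 < α) (hα2 : α < 2) : cFrac α / α * (2 * α * Ccos α) = 1 := by
  have h := Ccos_eq α hα hα2
  have g1 : 0 < Real.Gamma (1 / 2 + α / 2) := Real.Gamma_pos_of_pos (by positivity)
  have g2 : 0 < Real.Gamma (1 - α / 2) := Real.Gamma_pos_of_pos (by linarith)
  have hp : 0 < √Real.pi := Real.sqrt_pos.2 Real.pi_pos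
  have h2 : (2 : ℝ) ^ (α - 1) * 2 * 2 ^ (-α) = 1 := by
    rw [← Real.rpow_add_one (by norm_num), ← Real.rpow_add (by norm_num)]
    simp
  unfold cFrac
  rw [div_div, div_mul_eq_mul_div, div_eq_one_iff_eq (by positivity)]
  linear_combination (α * 2 ^ (α - 1) * 2) * h +
    (α * √Real.pi * Real.Gamma (1 - α / 2)) * h2

lemma christov_eq (n : ℕ) (s : ℝ) : christov (n : ℤ) s =
    ∑ k ∈ Finset.range (n + 1), ((n.choose k : ℂ) * (-2) ^ k) * wf s ^ (k + 1) := by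
  have hw := w_ne s
  unfold christov wf
  rw [show Complex.I * (s : ℂ) - 1 = -2 + (1 + Complex.I * s) by ring, add_comm (Complex.I * (s : ℂ)) 1]
  rw [zpow_natCast, show (n : ℤ) + 1 = ((n + 1 : ℕ) : ℤ) by push_cast; rfl, zpow_natCast, add_pow,
    Finset.sum_div]
  refine Finset.sum_congr rfl fun k hk => ?_
  have hk : k ≤ n := by simpa [Nat.lt_succ_iff] using hk
  rw [inv_pow, show n + 1 = (n - k) + (k + 1) by omega, pow_add]
  field_simp
  
lemma CC'_eq (n : ℕ) (s : ℝ) : CC' n s =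
    (∑ k ∈ Finset.range (n + 1), ((n.choose k : ℂ) * (-2) ^ k) *
      (-Complex.I * ((k + 1 : ℕ) : ℂ) * wf s ^ (k + 2))).re := by
  have h : HasDerivAt (christov (n : ℤ)) (∑ k ∈ Finset.range (n + 1), ((n.choose k : ℂ) * (-2) ^ k) *
      (-Complex.I * ((k + 1 : ℕ) : ℂ) * wf s ^ (k + 2))) s := by
    rw [funext (christov_eq n)]
    exact HasDerivAt.fun_sum fun k _ => (wf_deriv (k + 1) s).const_mul _
  have h2 := Complex.reCLM.hasFDerivAt.comp_hasDerivAt s h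
  exact h2.deriv

lemma gbinomR_nat (n k : ℕ) : gbinomR (n : ℝ) k = n.choose k := by
  have h : ∀ k, ∏ i ∈ Finset.range k, ((n : ℝ) - (i : ℝ)) = (n.descFactorial k : ℝ) := by
    intro k
    induction k with
    | zero => simp
    | succ k ih =>
      rw [Finset.prod_range_succ, ih, Nat.descFactorial_succ]
      rcases le_or_gt k n with h | h
      · push_cast [Nat.cast_sub h]; ring
      · rw [Nat.descFactorial_of_lt h]; simp
  unfold gbinomR
  rw [h, Nat.descFactorial_eq_factorial_mul_choose]
  have : (k.factorial : ℝ) ≠ 0 := by exact_mod_cast k.factorial_ne_zero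
  push_cast
  field_simp

lemma gamma_gbinom (α : ℝ) (hα : 0 < α) (k : ℕ) :
    (-2) ^ k * (Real.Gamma (k + 1 + α) / k.factorial) =
      Real.Gamma (1 + α) * (gbinomR (-1 - α) k * 2 ^ k) := by
  have h : ∀ k : ℕ, (-1) ^ k * Real.Gamma (k + 1 + α) =
      Real.Gamma (1 + α) * ∏ i ∈ Finset.range k, ((-1 - α) - (i : ℝ)) := by
    intro k
    induction k with
    | zero => simp
    | succ k ih =>
      rw [Finset.prod_range_succ, ← mul_assoc, ← ih]
      push_cast
      rw [show (k : ℝ) + 1 + 1 + α = (k + 1 + α) + 1 by ring, Real.Gamma_add_one (by positivity)]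
      ring
  unfold gbinomR
  rw [show (-2 : ℝ) = (-1) * 2 by norm_num, mul_pow]
  linear_combination (2 ^ k / (k.factorial : ℝ)) * h k

lemma sum_ident (n : ℕ) (a : ℕ → ℂ) (z : ℂ) :
    ∑ k ∈ Finset.range (n + 1), (n.choose k : ℂ) * a k * (1 + z) ^ (n - k) =
    ∑ l ∈ Finset.range (n + 1), (n.choose l : ℂ) * z ^ (n - l) *
      ∑ k ∈ Finset.range (l + 1), (l.choose k : ℂ) * a k := by
  have e : ∀ l ∈ Finset.range (n + 1), (n.choose l : ℂ) * z ^ (n - l) *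
      ∑ k ∈ Finset.range (l + 1), (l.choose k : ℂ) * a k =
      ∑ k ∈ Finset.range (n + 1), (n.choose l : ℂ) * z ^ (n - l) * ((l.choose k : ℂ) * a k) := by
    intro l hl
    rw [Finset.mul_sum]
    refine Finset.sum_subset (Finset.range_mono (by simpa using hl)) ?_
    intro k _ hk
    have hlt : l < k := by simpa using hk
    rw [Nat.choose_eq_zero_of_lt hlt]; simp
  rw [Finset.sum_congr rfl e, Finset.sum_comm]
  refine Finset.sum_congr rfl fun k hk => ?_
  have hk : k ≤ n := by simpa [Nat.lt_succ_iff] using hk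
  obtain ⟨d, rfl⟩ := Nat.exists_eq_add_of_le hk
  rw [add_assoc, Finset.sum_range_add, Finset.sum_eq_zero, zero_add, Nat.add_sub_cancel_left, add_pow,
    Finset.mul_sum]
  · refine Finset.sum_congr rfl fun j hj => ?_
    have hj : j ≤ d := by simpa [Nat.lt_succ_iff] using hj
    have := Nat.choose_mul (n := k + d) (k := k + j) (s := k) (by omega)
    rw [Nat.add_sub_cancel_left, Nat.add_sub_cancel_left] at this
    have h2 : (((k + d).choose (k + j) : ℕ) : ℂ) * ((k + j).choose k : ℕ) =
      ((k + d).choose k : ℕ) * (d.choose j : ℕ) := by exact_mod_cast this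
    rw [one_pow, show k + d - (k + j) = d - j by omega]
    linear_combination -(a k * z ^ (d - j)) * h2
  · intro l hl
    rw [Nat.choose_eq_zero_of_lt (by simpa using hl : l < k)]; simp

lemma split_sum (n : ℕ) (G : ℕ → ℂ) : ∑ l ∈ Finset.range (n + 1), G l =
    ∑ l ∈ (Finset.range (n + 1)).filter (fun l => 2 * l ≤ n), G (2 * l) +
    ∑ l ∈ (Finset.range (n + 1)).filter (fun l => 2 * l + 1 ≤ n), G (2 * l + 1) := by
  rw [← Finset.sum_filter_add_sum_filter_not (Finset.range (n + 1)) (fun l => Even l)]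
  congr 1
  · refine Finset.sum_nbij' (fun l => l / 2) (fun l => 2 * l) ?_ ?_ ?_ ?_ ?_
    · intro l hl; simp only [Finset.mem_filter, Finset.mem_range, Nat.even_iff] at *; omega
    · intro l hl; simp only [Finset.mem_filter, Finset.mem_range, Nat.even_iff] at *; omega
    · intro l hl; simp only [Finset.mem_filter, Finset.mem_range, Nat.even_iff] at *; omega
    · intro l hl; simp only [Finset.mem_filter, Finset.mem_range] at *; omega
    · intro l hl; simp only [Finset.mem_filter, Finset.mem_range, Nat.even_iff] at *
      congr 1; omega
  · refine Finset.sum_nbij' (fun l => l / 2) (fun l => 2 * l + 1) ?_ ?_ ?_ ?_ ?_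
    · intro l hl; simp only [Finset.mem_filter, Finset.mem_range, Nat.even_iff] at *; omega
    · intro l hl; simp only [Finset.mem_filter, Finset.mem_range, Nat.even_iff] at *; omega
    · intro l hl; simp only [Finset.mem_filter, Finset.mem_range, Nat.even_iff] at *; omega
    · intro l hl; simp only [Finset.mem_filter, Finset.mem_range] at *; omega
    · intro l hl; simp only [Finset.mem_filter, Finset.mem_range, Nat.even_iff] at *
      congr 1; omega

lemma polar (x s : ℝ) : (1 + Complex.I * (x : ℂ)) ^ (-(s : ℂ)) =
    (((1 + x ^ 2) ^ (s / 2))⁻¹ : ℝ) * Complex.exp (((-(s * Real.arctan x) : ℝ) : ℂ) * Complex.I) := by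
  have hp : 0 < 1 + x ^ 2 := by positivity
  have hc := Real.cos_arctan_pos x
  have hlog : Complex.log (1 + Complex.I * (x : ℂ)) =
      ((Real.log (1 + x ^ 2) / 2 : ℝ) : ℂ) + (Real.arctan x : ℝ) * Complex.I := by
    have : 1 + Complex.I * (x : ℂ) =
        Complex.exp (((Real.log (1 + x ^ 2) / 2 : ℝ) : ℂ) + (Real.arctan x : ℝ) * Complex.I) := by
      rw [Complex.exp_add, ← Complex.ofReal_exp, Complex.exp_mul_I, ← Complex.ofReal_cos,
        ← Complex.ofReal_sin, ← Real.log_sqrt hp.le, Real.exp_log (Real.sqrt_pos.2 hp),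
        Real.cos_arctan, Real.sin_arctan]
      have : ((√(1 + x ^ 2) : ℝ) : ℂ) ≠ 0 := by exact_mod_cast (Real.sqrt_pos.2 hp).ne'
      push_cast
      field_simp
    have him : (((Real.log (1 + x ^ 2) / 2 : ℝ) : ℂ) +
        ((Real.arctan x : ℝ) : ℂ) * Complex.I).im = Real.arctan x := by
      rw [Complex.add_im, Complex.ofReal_im, Complex.im_ofReal_mul, Complex.I_im]; ring
    rw [this, Complex.log_exp]
    · rw [him]; linarith [Real.neg_pi_div_two_lt_arctan x, Real.pi_pos]
    · rw [him]; linarith [Real.arctan_lt_pi_div_two x, Real.pi_pos]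
  rw [Complex.cpow_def_of_ne_zero (w_ne x), hlog, ← Real.rpow_neg hp.le, Real.rpow_def_of_pos hp,
    Complex.ofReal_exp, ← Complex.exp_add]
  congr 1
  push_cast; ring

lemma polar2 (α : ℝ) (n : ℕ) (x : ℝ) : (1 + Complex.I * (x : ℂ)) ^ (-((n + 1 + α : ℝ) : ℂ)) =
    (((1 + x ^ 2) ^ (((n : ℝ) + 1 + α) / 2))⁻¹ : ℝ) *
     (Complex.exp (((((n : ℝ) + 1 + α) * arccot x - Real.pi * α / 2 : ℝ) : ℂ) * Complex.I) *
      (-Complex.I) ^ (n + 1)) := by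
  rw [polar]
  congr 1
  have h : -Complex.I = Complex.exp (-(Real.pi / 2) * Complex.I) := by
    rw [Complex.exp_mul_I, Complex.cos_neg, Complex.sin_neg, Complex.cos_pi_div_two,
      Complex.sin_pi_div_two]; ring
  rw [h, ← Complex.exp_nat_mul, ← Complex.exp_add]
  congr 1
  unfold arccot
  push_cast; ring

lemma final_alg (α : ℝ) (hα : 0 < α) (n : ℕ) (x : ℝ) :
    (∑ k ∈ Finset.range (n + 1), ((n.choose k : ℂ) * (-2) ^ k) *
      (((Real.Gamma (k + 1 + α) / k.factorial : ℝ) : ℂ) *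
      (1 + Complex.I * x) ^ (-((k + 1 + α : ℝ) : ℂ)))).re =
    (Real.Gamma (1 + α) / (1 + x ^ 2) ^ (((n : ℝ) + 1 + α) / 2)) *
          Real.sin (((n : ℝ) + 1 + α) * arccot x - Real.pi * α / 2) *
          ∑ l ∈ (Finset.range (n + 1)).filter (fun l => 2 * l ≤ n),
            (-1 : ℝ) ^ l * gbinomR (n : ℝ) (2 * l) * x ^ (n - 2 * l) * HR α (2 * l)
        - (Real.Gamma (1 + α) / (1 + x ^ 2) ^ (((n : ℝ) + 1 + α) / 2)) *
          Real.cos (((n : ℝ) + 1 + α) * arccot x - Real.pi * α / 2) *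
          ∑ l ∈ (Finset.range (n + 1)).filter (fun l => 2 * l + 1 ≤ n),
            (-1 : ℝ) ^ l * gbinomR (n : ℝ) (2 * l + 1) * x ^ (n - 1 - 2 * l) *
              HR α (2 * l + 1) := by
  set a : ℕ → ℂ := fun k => ((gbinomR (-1 - α) k * 2 ^ k : ℝ) : ℂ) with ha
  set W : ℂ := (1 + Complex.I * x) ^ (-((n + 1 + α : ℝ) : ℂ)) with hW
  have e1 : ∀ k ∈ Finset.range (n + 1), ((n.choose k : ℂ) * (-2) ^ k) *
      (((Real.Gamma (k + 1 + α) / k.factorial : ℝ) : ℂ) *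
      (1 + Complex.I * x) ^ (-((k + 1 + α : ℝ) : ℂ))) =
      (Real.Gamma (1 + α) * W) * ((n.choose k : ℂ) * a k * (1 + Complex.I * x) ^ (n - k)) := by
    intro k hk
    have hk : k ≤ n := by simpa [Nat.lt_succ_iff] using hk
    have h1 : (1 + Complex.I * (x : ℂ)) ^ (-((k + 1 + α : ℝ) : ℂ)) = W * (1 + Complex.I * x) ^ (n - k) := by
      rw [hW, ← Complex.cpow_natCast, ← Complex.cpow_add _ _ (w_ne x), Nat.cast_sub hk]
      congr 1; push_cast; ring
    have h2 : ((-2 : ℂ)) ^ k * ((Real.Gamma (k + 1 + α) / k.factorial : ℝ) : ℂ) =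
      Real.Gamma (1 + α) * a k := by
      have := congrArg (fun r : ℝ => (r : ℂ)) (gamma_gbinom α hα k)
      simp only [Complex.ofReal_mul, Complex.ofReal_pow, Complex.ofReal_neg, Complex.ofReal_ofNat] at this
      simp only [ha, Complex.ofReal_mul, Complex.ofReal_pow, Complex.ofReal_ofNat]
      exact this
    rw [h1]
    linear_combination ((n.choose k : ℂ) * W * (1 + Complex.I * x) ^ (n - k)) * h2
  have hH : ∀ l : ℕ, ∑ k ∈ Finset.range (l + 1), (l.choose k : ℂ) * a k = ((HR α l : ℝ) : ℂ) := by
    intro l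
    unfold HR
    rw [Complex.ofReal_sum]
    refine Finset.sum_congr rfl fun k _ => ?_
    rw [gbinomR_nat]; simp only [ha]; push_cast; ring
  rw [Finset.sum_congr rfl e1, ← Finset.mul_sum, sum_ident]
  simp_rw [hH]
  rw [hW, polar2]
  set θ := ((n : ℝ) + 1 + α) * arccot x - Real.pi * α / 2
  set R := (1 + x ^ 2) ^ (((n : ℝ) + 1 + α) / 2)
  have e2 : (-Complex.I) ^ (n + 1) * ∑ l ∈ Finset.range (n + 1),
      (n.choose l : ℂ) * (Complex.I * x) ^ (n - l) * ((HR α l : ℝ) : ℂ) =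
      ∑ l ∈ Finset.range (n + 1), (-Complex.I) ^ (l + 1) *
        ((gbinomR n l * x ^ (n - l) * HR α l : ℝ) : ℂ) := by
    rw [Finset.mul_sum]
    refine Finset.sum_congr rfl fun l hl => ?_
    have hl : l ≤ n := by simpa [Nat.lt_succ_iff] using hl
    have : (-Complex.I) ^ (n + 1) = (-Complex.I) ^ (n - l) * (-Complex.I) ^ (l + 1) := by
      rw [← pow_add]; congr 1; omega
    have h3 : (-Complex.I) ^ (n - l) * Complex.I ^ (n - l) = 1 := by
      rw [← mul_pow]; simp
    rw [this, mul_pow, gbinomR_nat]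
    push_cast
    linear_combination ((-Complex.I) ^ (l + 1) * (n.choose l : ℂ) * (x : ℂ) ^ (n - l) * (HR α l : ℂ)) * h3
  set S1 := ∑ l ∈ (Finset.range (n + 1)).filter (fun l => 2 * l ≤ n),
            (-1 : ℝ) ^ l * gbinomR (n : ℝ) (2 * l) * x ^ (n - 2 * l) * HR α (2 * l) with hS1
  set S2 := ∑ l ∈ (Finset.range (n + 1)).filter (fun l => 2 * l + 1 ≤ n),
            (-1 : ℝ) ^ l * gbinomR (n : ℝ) (2 * l + 1) * x ^ (n - 1 - 2 * l) *
              HR α (2 * l + 1) with hS2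
  have e3 : ∑ l ∈ Finset.range (n + 1), (-Complex.I) ^ (l + 1) *
        ((gbinomR n l * x ^ (n - l) * HR α l : ℝ) : ℂ) = -Complex.I * S1 - S2 := by
    rw [split_sum, sub_eq_add_neg]
    congr 1
    · rw [hS1, Complex.ofReal_sum, Finset.mul_sum]
      refine Finset.sum_congr rfl fun l _ => ?_
      rw [pow_succ, pow_mul, neg_sq, Complex.I_sq]
      push_cast; ring
    · rw [hS2, Complex.ofReal_sum, ← Finset.sum_neg_distrib]
      refine Finset.sum_congr rfl fun l _ => ?_
      rw [show 2 * l + 1 + 1 = 2 * (l + 1) by ring, pow_mul, neg_sq, Complex.I_sq,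
        show n - 1 - 2 * l = n - (2 * l + 1) by omega]
      push_cast; ring
  have e4 : (Real.Gamma (1 + α) : ℂ) * (((R⁻¹ : ℝ) : ℂ) * (Complex.exp ((θ : ℂ) * Complex.I) *
      (-Complex.I) ^ (n + 1))) * ∑ l ∈ Finset.range (n + 1),
      (n.choose l : ℂ) * (Complex.I * x) ^ (n - l) * ((HR α l : ℝ) : ℂ) =
      ((Real.Gamma (1 + α) * R⁻¹ : ℝ) : ℂ) * (Complex.exp ((θ : ℂ) * Complex.I) *
        (-Complex.I * S1 - S2)) := by
    rw [← e3, ← e2]; push_cast; ring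
  rw [e4, Complex.re_ofReal_mul, Complex.mul_re, Complex.exp_ofReal_mul_I_re,
    Complex.exp_ofReal_mul_I_im]
  simp
  ring

theorem fracLap_CC (α : ℝ) (hα : α ∈ Set.Ioo (0 : ℝ) 2) (n : ℕ) (x : ℝ) :
    IntegrableOn (fun y : ℝ => (CC' n (x - y) - CC' n (x + y)) * y ^ (-α)) (Set.Ioi 0) ∧
    (cFrac α / α) * ∫ y in Set.Ioi (0 : ℝ), (CC' n (x - y) - CC' n (x + y)) * y ^ (-α) =
      (Real.Gamma (1 + α) / (1 + x ^ 2) ^ (((n : ℝ) + 1 + α) / 2)) *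
          Real.sin (((n : ℝ) + 1 + α) * arccot x - Real.pi * α / 2) *
          ∑ l ∈ (Finset.range (n + 1)).filter (fun l => 2 * l ≤ n),
            (-1 : ℝ) ^ l * gbinomR (n : ℝ) (2 * l) * x ^ (n - 2 * l) * HR α (2 * l)
        - (Real.Gamma (1 + α) / (1 + x ^ 2) ^ (((n : ℝ) + 1 + α) / 2)) *
          Real.cos (((n : ℝ) + 1 + α) * arccot x - Real.pi * α / 2) *
          ∑ l ∈ (Finset.range (n + 1)).filter (fun l => 2 * l + 1 ≤ n),
            (-1 : ℝ) ^ l * gbinomR (n : ℝ) (2 * l + 1) * x ^ (n - 1 - 2 * l) *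
              HR α (2 * l + 1) := by
  obtain ⟨hα, hα2⟩ := hα
  set c : ℕ → ℂ := fun k => (n.choose k : ℂ) * (-2) ^ k with hc
  set f : ℕ → ℝ → ℂ := fun k y => ((y ^ (-α) : ℝ) : ℂ) *
      (-Complex.I * ((k + 1 : ℕ) : ℂ) * (wf (x - y) ^ (k + 2) - wf (x + y) ^ (k + 2))) with hf
  have hi : ∀ k ∈ Finset.range (n + 1), IntegrableOn (fun y => c k * f k y) (Set.Ioi 0) :=
    fun k _ => (main_pow α hα hα2 k x).1.const_mul _
  have hS : IntegrableOn (fun y => ∑ k ∈ Finset.range (n + 1), c k * f k y) (Set.Ioi 0) :=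
    integrable_finsetSum _ hi
  have e : (fun y : ℝ => (CC' n (x - y) - CC' n (x + y)) * y ^ (-α)) =
      fun y => RCLike.re (∑ k ∈ Finset.range (n + 1), c k * f k y) := by
    ext y
    rw [CC'_eq, CC'_eq, ← Complex.sub_re, ← Finset.sum_sub_distrib, ← Complex.re_mul_ofReal,
      Finset.sum_mul]
    change _ = Complex.re _
    congr 1
    refine Finset.sum_congr rfl fun k _ => ?_
    simp only [hf, hc]
    ring
  refine ⟨?_, ?_⟩
  · rw [e]; exact hS.re
  · have h1 : ∫ y in Set.Ioi (0 : ℝ), (CC' n (x - y) - CC' n (x + y)) * y ^ (-α) =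
        RCLike.re (∫ y in Set.Ioi (0 : ℝ), ∑ k ∈ Finset.range (n + 1), c k * f k y) := by
      rw [← integral_re hS]
      exact congrArg (fun g : ℝ → ℝ => ∫ y in Set.Ioi (0 : ℝ), g y) e
    have h2 : ∫ y in Set.Ioi (0 : ℝ), ∑ k ∈ Finset.range (n + 1), c k * f k y =
        ((2 * α * Ccos α : ℝ) : ℂ) * ∑ k ∈ Finset.range (n + 1), c k *
          (((Real.Gamma (k + 1 + α) / k.factorial : ℝ) : ℂ) *
            (1 + Complex.I * x) ^ (-((k + 1 + α : ℝ) : ℂ))) := by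
      rw [integral_finsetSum _ hi, Finset.mul_sum]
      refine Finset.sum_congr rfl fun k _ => ?_
      rw [integral_const_mul, (main_pow α hα hα2 k x).2]
      ring
    rw [h1, h2, RCLike.re_eq_complex_re, Complex.re_ofReal_mul, ← mul_assoc,
      const_eq α hα hα2, one_mul, ← final_alg α hα n x]
end

section
/- Let α ∈ (0,2), n ∈ ℕ with n ≥ 1, and x ∈ ℝ. Define h : ℂ → ℂ by h(z) = z^(−α)·(z − x − i)^(n−1), using the principal branch for z^(−α). Then the n-th complex derivative of h at the point z = x − i satisfies (1/n!)·h^(n)(x−i) = ∑_{k=1}^{n} C(n−1,k−1)·C(−α,k)·(x−i)^(−α−k)·(−2i)^(k−1). (Up to a sign, this is the residue of the integrand g_n at its pole z = x−i in the contour-integral computation of the fractional Laplacian of λ_n.) -/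
open MeasureTheory Finset

lemma iterDeriv_cpow_aux (a : ℂ) (k : ℕ) : ∀ z ∈ Complex.slitPlane,
    iteratedDeriv k (fun w : ℂ => w ^ a) z =
      (∏ i ∈ Finset.range k, (a - (i : ℂ))) * z ^ (a - (k : ℂ)) := by
  induction k with
  | zero => intro z _; simp
  | succ k ih =>
    intro z hz
    rw [iteratedDeriv_succ]
    have he : iteratedDeriv k (fun w : ℂ => w ^ a) =ᶠ[nhds z]
        fun w => (∏ i ∈ Finset.range k, (a - (i : ℂ))) * w ^ (a - (k : ℂ)) := by
      filter_upwards [Complex.isOpen_slitPlane.mem_nhds hz] with w hw using ih w hw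
    rw [he.deriv_eq]
    have h1 := ((hasDerivAt_id z).cpow_const (c := a - (k : ℂ)) hz).const_mul
      (∏ i ∈ Finset.range k, (a - (i : ℂ)))
    have h2 := h1.deriv
    simp only [id] at h2
    rw [h2, Finset.prod_range_succ]
    push_cast
    rw [show a - ((k : ℂ) + 1) = a - k - 1 by ring]
    ring

lemma gbinom_nat_aux (m k : ℕ) : gbinom (m : ℂ) k = (m.choose k : ℂ) := by
  unfold gbinom
  rw [← descPochhammer_eval_eq_prod_range, descPochhammer_eval_eq_descFactorial,
    Nat.descFactorial_eq_factorial_mul_choose]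
  push_cast
  have : (k.factorial : ℂ) ≠ 0 := by exact_mod_cast k.factorial_ne_zero
  field_simp

theorem residue_at_x_sub_i (α : ℝ) (hα : α ∈ Set.Ioo (0 : ℝ) 2) (n : ℕ) (hn : 1 ≤ n) (x : ℝ) :
    (1 / (n.factorial : ℂ)) *
        iteratedDeriv n
          (fun z : ℂ => z ^ (-(α : ℂ)) * (z - (x : ℂ) - Complex.I) ^ (n - 1))
          ((x : ℂ) - Complex.I) =
      ∑ k ∈ Finset.Icc 1 n,
        gbinom ((n : ℂ) - 1) (k - 1) * gbinom (-(α : ℂ)) k *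
          ((x : ℂ) - Complex.I) ^ (-(α : ℂ) - (k : ℂ)) * (-(2 * Complex.I)) ^ (k - 1) := by
  obtain ⟨m, rfl⟩ : ∃ m, n = m + 1 := ⟨n - 1, by omega⟩
  have hz : (x : ℂ) - Complex.I ∈ Complex.slitPlane := by
    rw [Complex.mem_slitPlane_iff]; right; simp
  have hf : ContDiffAt ℂ ((m + 1 : ℕ) : ℕ∞) (fun z : ℂ => z ^ (-(α : ℂ))) ((x : ℂ) - Complex.I) := by
    have hd : DifferentiableOn ℂ (fun z : ℂ => z ^ (-(α : ℂ))) Complex.slitPlane := fun w hw =>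
      ((hasDerivAt_id w).cpow_const (c := -(α : ℂ)) hw).differentiableAt.differentiableWithinAt
    exact (hd.contDiffOn Complex.isOpen_slitPlane).contDiffAt
      (Complex.isOpen_slitPlane.mem_nhds hz)
  have hg : ContDiffAt ℂ ((m + 1 : ℕ) : ℕ∞)
      (fun z : ℂ => (z - (x : ℂ) - Complex.I) ^ (m + 1 - 1)) ((x : ℂ) - Complex.I) := by
    fun_prop
  have hgd : ∀ j : ℕ, iteratedDeriv j (fun z : ℂ => (z - (x : ℂ) - Complex.I) ^ (m + 1 - 1))
      ((x : ℂ) - Complex.I) = (m.descFactorial j : ℂ) * (-(2 * Complex.I)) ^ (m - j) := by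
    intro j
    have h1 := congrFun (iteratedDeriv_comp_sub_const j (fun z : ℂ => z ^ m)
      ((x : ℂ) + Complex.I)) ((x : ℂ) - Complex.I)
    simp only [iteratedDeriv_pow] at h1
    simp only [Nat.add_sub_cancel, sub_sub]
    rw [h1]
    congr 2
    ring
  rw [iteratedDeriv_fun_mul hf hg, Finset.sum_range_succ']
  rw [hgd (m + 1 - 0), Nat.descFactorial_eq_zero_iff_lt.2 (by omega)]
  rw [← Finset.sum_bij (s := Finset.range (m + 1)) (t := Finset.Icc 1 (m + 1)) (fun k _ => k + 1)
    (fun k hk => by simp at hk ⊢; omega) (fun a _ b _ h => by simpa using h)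
    (fun b hb => ⟨b - 1, by simp at hb ⊢; omega, by simp at hb ⊢; omega⟩) (fun _ _ => rfl)]
  simp only [Nat.cast_zero, zero_mul, mul_zero, add_zero, Finset.mul_sum]
  refine Finset.sum_congr rfl fun k hk => ?_
  have hk' : k ≤ m := by simp at hk; omega
  rw [hgd, iterDeriv_cpow_aux _ _ _ hz]
  have e1 : (((m + 1 : ℕ) : ℂ) - 1) = (m : ℂ) := by push_cast; ring
  rw [e1, Nat.add_sub_cancel, gbinom_nat_aux]
  obtain ⟨d, rfl⟩ := Nat.exists_eq_add_of_le hk'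
  rw [show k + d + 1 - (k + 1) = d by omega, show k + d - d = k by omega]
  unfold gbinom
  have hA : (((k + d).descFactorial d : ℕ) : ℂ) * k.factorial = (k + d).factorial := by
    have := Nat.factorial_mul_descFactorial (show d ≤ k + d by omega)
    rw [Nat.add_sub_cancel] at this
    rw [mul_comm]; exact_mod_cast this
  have hB : (((k + d).choose k : ℕ) : ℂ) * k.factorial * d.factorial = (k + d).factorial := by
    have := Nat.choose_mul_factorial_mul_factorial (show k ≤ k + d by omega)
    rw [show k + d - k = d by omega] at this
    exact_mod_cast this
  have hC : (((k + d + 1).choose (k + 1) : ℕ) : ℂ) * (k + 1).factorial * d.factorial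
      = (k + d + 1).factorial := by
    have := Nat.choose_mul_factorial_mul_factorial (show k + 1 ≤ k + d + 1 by omega)
    rw [show k + d + 1 - (k + 1) = d by omega] at this
    exact_mod_cast this
  have n1 : (k.factorial : ℂ) ≠ 0 := by exact_mod_cast k.factorial_ne_zero
  have n2 : (d.factorial : ℂ) ≠ 0 := by exact_mod_cast d.factorial_ne_zero
  have n3 : ((k + 1).factorial : ℂ) ≠ 0 := by exact_mod_cast (k + 1).factorial_ne_zero
  have n4 : ((k + d + 1).factorial : ℂ) ≠ 0 := by exact_mod_cast (k + d + 1).factorial_ne_zero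
  have hD : (((k + d).descFactorial d : ℕ) : ℂ) = ((k + d).choose k : ℕ) * d.factorial := by
    apply mul_right_cancel₀ n1
    rw [hA, ← hB]; ring
  rw [hD]
  have hE : 1 / ((k + d + 1).factorial : ℂ) * (((k + d + 1).choose (k + 1) : ℕ) : ℂ) * d.factorial
      = 1 / (k + 1).factorial := by
    field_simp
    rw [← hC]; ring
  generalize ∏ i ∈ Finset.range (k + 1), (-(α : ℂ) - (i : ℂ)) = P
  generalize ((x : ℂ) - Complex.I) ^ (-(α : ℂ) - ((k + 1 : ℕ) : ℂ)) = Q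
  rw [div_eq_mul_one_div P, ← hE]
  ring
end
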